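/- (Frenkel–Turaev summation) Let p, q be complex numbers with |p| < 1, |q| < 1, let N be a nonnegative integer, and let a, b, c, d, e be nonzero complex numbers satisfying the balancing condition b·c·d·e = a²·q^{N+1}, generic in the sense that every theta factor appearing in a denominator below is nonzero. Then ∑_{n=0}^{N} [θ(aq^{2n};p)/θ(a;p)] · [θ(a;p)_n θ(b;p)_n θ(c;p)_n θ(d;p)_n θ(e;p)_n θ(q^{−N};p)_n] / [θ(q;p)_n θ(aq/b;p)_n θ(aq/c;p)_n θ(aq/d;p)_n θ(aq/e;p)_n θ(aq^{N+1};p)_n] · q^n = [θ(aq;p)_N θ(aq/(bc);p)_N θ(aq/(bd);p)_N θ(aq/(cd);p)_N] / [θ(aq/b;p)_N θ(aq/c;p)_N θ(aq/d;p)_N θ(aq/(bcd);p)_N]. -/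

import Mathlib

open Complex Real Filter Topology

/-- The infinite q-Pochhammer symbol (z;q)_inf. -/
noncomputable def qpoch (z q : ℂ) : ℂ := ∏' j : ℕ, (1 - z * q ^ j)

/-- The elliptic gamma function Γ(z;p,q). -/
noncomputable def egamma (z p q : ℂ) : ℂ :=
  ∏' jk : ℕ × ℕ, (1 - z⁻¹ * p ^ (jk.1 + 1) * q ^ (jk.2 + 1)) / (1 - z * p ^ jk.1 * q ^ jk.2)

/-- The short Jacobi theta function θ(z;p) (base first argument). -/
noncomputable def theta (p z : ℂ) : ℂ := qpoch z p * qpoch (p * z⁻¹) p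

/-- The elliptic Pochhammer symbol θ(z;p)_n for n ≥ 0 (with shift base q). -/
noncomputable def thetaPochN (p q z : ℂ) (n : ℕ) : ℂ := ∏ j ∈ Finset.range n, theta p (z * q ^ j)

/-!
By the Jacobi triple product, `θ(xy;p) θ(x/y;p)` is a product of two theta series. Sorting the
double series by the parity of the sum of the indices writes it as `x (F(x) G(y) - G(x) F(y))`, so
Weierstrass's three-term relation is the Plücker relation between `2 × 2` minors.

Let `V n` be the `n`-th term of the series with last parameter `f`, and `V' n` the one with
`(a, e, f)` replaced by `(aq, eq, fq)`. Two three-term relations give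
`V (n + 1) - R * V' n = G (n + 1) - G n`, where `R` is the product side for `N = 1`, and
`V 0 = G 0 = 1`. Hence the sum of `V` up to `n = N` is `R` times the sum of `V'` up to `n = N - 1`,
plus `G N`. For `f = q⁻ᴺ` and `N ≥ 1` the remainder `G N` vanishes because it contains
`θ(fq;p)_N`. The product side satisfies the resulting recursion, and induction on `N` concludes.
-/

section FiniteTripleProduct

open Finset.HasAntidiagonal

section CommRing

variable {R : Type*} [CommRing R]

/-- The finite q-Pochhammer symbol `(z;q)_n`. -/
def qpochN (z q : R) (n : ℕ) : R := ∏ j ∈ Finset.range n, (1 - z * q ^ j)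

lemma qpochN_zero (z q : R) : qpochN z q 0 = 1 := Finset.prod_range_zero _

lemma qpochN_succ (z q : R) (n : ℕ) :
    qpochN z q (n + 1) = qpochN z q n * (1 - z * q ^ n) :=
  Finset.prod_range_succ _ n

lemma qpochN_add (z q : R) (m n : ℕ) :
    qpochN z q (m + n) = qpochN z q m * qpochN (z * q ^ m) q n := by
  simp only [qpochN, Finset.prod_range_add, pow_add, mul_assoc]

lemma qpochN_succ' (z q : R) (n : ℕ) :
    qpochN z q (n + 1) = (1 - z) * qpochN (z * q) q n := by
  rw [add_comm, qpochN_add]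
  simp [qpochN]

end CommRing

variable {K : Type*} [Field K]

lemma one_sub_mul_pow_ne_zero {q : K} (hq : ∀ j : ℕ, q ^ (j + 1) ≠ 1) (j : ℕ) :
    1 - q * q ^ j ≠ 0 := by
  rw [← pow_succ']
  exact sub_ne_zero.mpr (hq j).symm

lemma qpochN_self_ne_zero {q : K} (hq : ∀ j : ℕ, q ^ (j + 1) ≠ 1) (n : ℕ) : qpochN q q n ≠ 0 :=
  Finset.prod_ne_zero_iff.mpr fun j _ => one_sub_mul_pow_ne_zero hq j

lemma pow_succ_choose_two {M : Type*} [Monoid M] (q : M) (n : ℕ) :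
    q ^ (n + 1).choose 2 = q ^ n * q ^ n.choose 2 := by
  rw [Nat.choose_succ_succ' n 1, Nat.choose_one_right, pow_add]

theorem qpochN_eq_sum_antidiagonal {q : K} (hq : ∀ j : ℕ, q ^ (j + 1) ≠ 1) (z : K) (n : ℕ) :
    qpochN z q n = ∑ ij ∈ antidiagonal n, (-z) ^ ij.1 * q ^ ij.1.choose 2 *
      (qpochN q q n / (qpochN q q ij.1 * qpochN q q ij.2)) := by
  induction n generalizing z with
  | zero => simp [qpochN_zero]
  | succ n ih =>
    have hQ := qpochN_self_ne_zero hq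
    have hq1 := one_sub_mul_pow_ne_zero hq
    set t : ℕ × ℕ → K := fun ij => (-z) ^ ij.1 * q ^ ij.1.choose 2 *
      (qpochN q q n / (qpochN q q ij.1 * qpochN q q ij.2)) with ht
    have h_left : ∑ ij ∈ antidiagonal (n + 1), q ^ ij.1 * (1 - q ^ ij.2) * t ij =
        qpochN (z * q) q n := by
      rw [Finset.Nat.sum_antidiagonal_succ', ih]
      simp only [pow_zero, sub_self, mul_zero, zero_mul, zero_add]
      refine Finset.sum_congr rfl fun ij _ => ?_
      have := hQ ij.1
      have := hQ ij.2
      have := hq1 ij.2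
      simp only [ht, qpochN_succ, pow_succ']
      field_simp
      ring
    have h_right : ∑ ij ∈ antidiagonal (n + 1), (1 - q ^ ij.1) * t ij =
        -z * qpochN (z * q) q n := by
      rw [Finset.Nat.sum_antidiagonal_succ, ih, Finset.mul_sum]
      simp only [pow_zero, sub_self, zero_mul, zero_add]
      refine Finset.sum_congr rfl fun ij _ => ?_
      have := hQ ij.1
      have := hQ ij.2
      have := hq1 ij.1
      simp only [ht, qpochN_succ, pow_succ_choose_two, pow_succ']
      field_simp
      ring
    calc qpochN z q (n + 1)
      _ = (1 - z) * qpochN (z * q) q n := qpochN_succ' z q n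
      _ = ∑ ij ∈ antidiagonal (n + 1),
            (q ^ ij.1 * (1 - q ^ ij.2) * t ij + (1 - q ^ ij.1) * t ij) := by
          rw [Finset.sum_add_distrib, h_left, h_right]
          ring
      _ = _ := Finset.sum_congr rfl fun ij hij => by
          have hn : q * q ^ n = q ^ ij.1 * q ^ ij.2 := by
            rw [← pow_succ', ← pow_add, mem_antidiagonal.mp hij]
          simp only [ht, qpochN_succ, hn]
          ring

lemma qpochN_reverse {z q : K} (hz : z ≠ 0) (hq : q ≠ 0) (n : ℕ) :
    qpochN z q n = (-z) ^ n * q ^ n.choose 2 * qpochN (q / (z * q ^ n)) q n := by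
  induction n with
  | zero => simp [qpochN_zero]
  | succ n ih =>
    have h_shift : q / (z * q ^ (n + 1)) * q = q / (z * q ^ n) := by field_simp; ring
    rw [qpochN_succ, ih, qpochN_succ', h_shift, pow_succ_choose_two]
    field_simp
    ring

lemma sq_pow_choose_two_mul_pow {M : Type*} [Monoid M] (s : M) (n : ℕ) :
    (s ^ 2) ^ n.choose 2 * s ^ n = s ^ n ^ 2 := by
  rw [← pow_mul, ← pow_add]
  congr 1
  induction n with
  | zero => rfl
  | succ n ih => rw [Nat.choose_succ_succ' n 1, Nat.choose_one_right]; linarith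

lemma sum_antidiagonal_add_self {M : Type*} [AddCommMonoid M] (f : ℕ × ℕ → M) (n : ℕ) :
    ∑ ij ∈ antidiagonal (n + n), f ij =
      ∑ k ∈ Finset.Icc (-n : ℤ) n, f ((n + k).toNat, (n - k).toNat) := by
  refine Finset.sum_bij' (fun ij _ => (ij.1 : ℤ) - n) (fun k _ => ((n + k).toNat, (n - k).toNat))
    ?_ ?_ ?_ ?_ ?_
  all_goals simp only [mem_antidiagonal, Finset.mem_Icc, Prod.forall]
  · omega
  · omega
  · intro i j h
    ext <;> dsimp only <;> omega
  · omega
  · intro i j h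
    congr 2 <;> omega

theorem qpochN_mul_qpochN_eq_sum_Icc {s w : K} (hs0 : s ≠ 0) (hs : ∀ j : ℕ, (s ^ 2) ^ (j + 1) ≠ 1)
    (hw : w ≠ 0) (n : ℕ) :
    qpochN (-(s * w)) (s ^ 2) n * qpochN (-(s / w)) (s ^ 2) n =
      ∑ k ∈ Finset.Icc (-n : ℤ) n, s ^ k ^ 2 * w ^ k *
        (qpochN (s ^ 2) (s ^ 2) (n + n) /
          (qpochN (s ^ 2) (s ^ 2) (n + k).toNat * qpochN (s ^ 2) (s ^ 2) (n - k).toNat)) := by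
  set z := -(s * w) / s ^ (2 * n) with hz
  have hz0 : z ≠ 0 := by simp [hz, hs0, hw]
  have h_coeff (i : ℕ) : (-z) ^ i * (s ^ 2) ^ i.choose 2 =
      w ^ n / s ^ n ^ 2 * (s ^ (i - n : ℤ) ^ 2 * w ^ (i - n : ℤ)) := by
    have h_sq : (i - n : ℤ) ^ 2 = (i ^ 2 : ℕ) + (n ^ 2 : ℕ) - (2 * n * i : ℕ) := by
      push_cast; ring
    rw [h_sq, zpow_sub₀ hs0, zpow_add₀ hs0, zpow_sub₀ hw, hz, neg_div, neg_neg, div_pow, ← pow_mul]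
    simp only [zpow_natCast, ← sq_pow_choose_two_mul_pow s i]
    field_simp
    ring
  have h_split : qpochN z (s ^ 2) (n + n) =
      w ^ n / s ^ n ^ 2 * (qpochN (-(s * w)) (s ^ 2) n * qpochN (-(s / w)) (s ^ 2) n) := by
    have h_left : s ^ 2 / (z * (s ^ 2) ^ n) = -(s / w) := by rw [hz, pow_mul]; field_simp
    have h_right : z * (s ^ 2) ^ n = -(s * w) := by rw [hz, pow_mul]; field_simp
    rw [qpochN_add, qpochN_reverse hz0 (pow_ne_zero 2 hs0), h_left, h_right, h_coeff, sub_self]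
    simp only [zpow_zero, ne_eq, OfNat.ofNat_ne_zero, not_false_eq_true, zero_pow]
    ring
  rw [qpochN_eq_sum_antidiagonal hs, sum_antidiagonal_add_self] at h_split
  refine mul_left_cancel₀ (a := w ^ n / s ^ n ^ 2) (by simp [hs0, hw]) ?_
  rw [← h_split, Finset.mul_sum]
  refine Finset.sum_congr rfl fun k hk => ?_
  have hk' : ((n + k).toNat : ℤ) - n = k := by rw [Finset.mem_Icc] at hk; omega
  rw [h_coeff, hk']
  ring

end FiniteTripleProduct

section JacobiTripleProduct

lemma summable_norm_neg_mul_pow {p : ℂ} (hp : ‖p‖ < 1) (z : ℂ) :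
    Summable fun j : ℕ => ‖-(z * p ^ j)‖ := by
  simpa only [norm_neg, norm_mul, norm_pow] using
    (summable_geometric_of_lt_one (norm_nonneg _) hp).mul_left ‖z‖

lemma tendsto_qpochN {p : ℂ} (hp : ‖p‖ < 1) (z : ℂ) :
    Tendsto (qpochN z p) atTop (𝓝 (qpoch z p)) := by
  unfold qpochN
  simpa only [qpoch, ← sub_eq_add_neg] using
    (multipliable_one_add_of_summable (summable_norm_neg_mul_pow hp z)).hasProd.tendsto_prod_nat

lemma pow_succ_ne_one {p : ℂ} (hp : ‖p‖ < 1) (j : ℕ) : p ^ (j + 1) ≠ 1 := fun h =>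
  (pow_lt_one₀ (norm_nonneg p) hp j.succ_ne_zero).ne (by rw [← norm_pow, h, norm_one])

lemma qpoch_self_ne_zero {p : ℂ} (hp : ‖p‖ < 1) : qpoch p p ≠ 0 := by
  have h_factor (j : ℕ) : 1 + -(p * p ^ j) ≠ 0 := by
    rw [← sub_eq_add_neg]
    exact one_sub_mul_pow_ne_zero (pow_succ_ne_one hp) j
  simpa only [qpoch, ← sub_eq_add_neg] using
    tprod_one_add_ne_zero_of_summable h_factor (summable_norm_neg_mul_pow hp p)

lemma exists_norm_qpochN_ratio_le {p : ℂ} (hp : ‖p‖ < 1) :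
    ∃ C, ∀ l m n, ‖qpochN p p l / (qpochN p p m * qpochN p p n)‖ ≤ C := by
  obtain ⟨C, hC⟩ := (tendsto_qpochN hp p).norm.bddAbove_range
  obtain ⟨C', hC'⟩ :=
    ((tendsto_qpochN hp p).inv₀ (qpoch_self_ne_zero hp)).norm.bddAbove_range
  rw [mem_upperBounds, Set.forall_mem_range] at hC hC'
  have hC₀ : 0 ≤ C := (norm_nonneg _).trans (hC 0)
  have hC'₀ : 0 ≤ C' := (norm_nonneg _).trans (hC' 0)
  refine ⟨C * (C' * C'), fun l m n => ?_⟩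
  rw [div_eq_mul_inv, mul_inv, norm_mul, norm_mul]
  gcongr <;> apply_rules

lemma tendsto_qpochN_ratio {p : ℂ} (hp : ‖p‖ < 1) (k : ℤ) :
    Tendsto (fun n : ℕ => qpochN p p (n + n) /
        (qpochN p p (n + k).toNat * qpochN p p (n - k).toNat)) atTop (𝓝 (qpoch p p)⁻¹) := by
  have h₀ : Tendsto (fun n : ℕ => n + n) atTop atTop := tendsto_id.atTop_add_atTop tendsto_id
  have h₁ (k : ℤ) : Tendsto (fun n : ℕ => (n + k).toNat) atTop atTop :=
    tendsto_atTop.mpr fun b => by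
      filter_upwards [eventually_ge_atTop (b + k.natAbs)] with n hn
      omega
  have h := tendsto_qpochN hp p
  have hne := qpoch_self_ne_zero hp
  have h_lim := (h.comp h₀).div ((h.comp (h₁ k)).mul (h.comp (h₁ (-k)))) (mul_ne_zero hne hne)
  rwa [div_mul_cancel_left₀ hne] at h_lim

lemma jacobiTheta₂_term_eq_zpow (k : ℤ) (z τ : ℂ) :
    jacobiTheta₂_term k z τ = cexp (π * I * τ) ^ k ^ 2 * cexp (2 * π * I * z) ^ k := by
  rw [jacobiTheta₂_term, ← exp_int_mul, ← exp_int_mul, ← Complex.exp_add]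
  congr 1
  push_cast
  ring

lemma norm_cexp_pi_mul_I_mul_lt_one {τ : ℂ} (hτ : 0 < τ.im) : ‖cexp (π * I * τ)‖ < 1 := by
  rw [norm_exp, Real.exp_lt_one_iff]
  simpa using mul_pos pi_pos hτ

lemma tendsto_sum_jacobiTheta₂_term_mul_qpochN_ratio {p τ : ℂ} (hp : ‖p‖ < 1) (hτ : 0 < τ.im)
    (z : ℂ) :
    Tendsto (fun n : ℕ => ∑ k ∈ Finset.Icc (-n : ℤ) n, jacobiTheta₂_term k z τ *
        (qpochN p p (n + n) / (qpochN p p (n + k).toNat * qpochN p p (n - k).toNat)))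
      atTop (𝓝 (jacobiTheta₂ z τ * (qpoch p p)⁻¹)) := by
  obtain ⟨C, hC⟩ := exists_norm_qpochN_ratio_le hp
  rw [jacobiTheta₂, ← tsum_mul_right]
  refine (tendsto_tsum_of_dominated_convergence
    (((summable_jacobiTheta₂_term_iff z τ).mpr hτ).norm.mul_right C) (fun k => ?_)
    (.of_forall fun n k => ?_)).congr fun n => (sum_eq_tsum_indicator _ _).symm
  · refine ((tendsto_qpochN_ratio hp k).const_mul _).congr' ?_
    filter_upwards [eventually_ge_atTop k.natAbs] with n hn
    have hk : k ∈ Finset.Icc (-n : ℤ) n := by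
      rw [Finset.mem_Icc]
      omega
    rw [Set.indicator_of_mem (Finset.mem_coe.mpr hk)]
  · refine (norm_indicator_le_norm_self _ _).trans ?_
    rw [norm_mul]
    gcongr
    exact hC _ _ _

theorem theta_neg_cexp_mul_cexp {τ : ℂ} (hτ : 0 < τ.im) (z : ℂ) :
    theta (cexp (π * I * τ) ^ 2) (-(cexp (π * I * τ) * cexp (2 * π * I * z))) =
      jacobiTheta₂ z τ * (qpoch (cexp (π * I * τ) ^ 2) (cexp (π * I * τ) ^ 2))⁻¹ := by
  set s := cexp (π * I * τ) with hs
  set w := cexp (2 * π * I * z) with hw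
  have hs0 : s ≠ 0 := exp_ne_zero _
  have hw0 : w ≠ 0 := exp_ne_zero _
  have hp : ‖s ^ 2‖ < 1 := by
    rw [norm_pow]
    exact pow_lt_one₀ (norm_nonneg _) (norm_cexp_pi_mul_I_mul_lt_one hτ) two_ne_zero
  have h_inv : s ^ 2 * (-(s * w))⁻¹ = -(s / w) := by field_simp
  have h_product := (tendsto_qpochN hp (-(s * w))).mul (tendsto_qpochN hp (-(s / w)))
  simp only [qpochN_mul_qpochN_eq_sum_Icc hs0 (pow_succ_ne_one hp) hw0] at h_product
  rw [theta, h_inv]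
  refine tendsto_nhds_unique h_product ?_
  simpa only [jacobiTheta₂_term_eq_zpow, hs, hw] using
    tendsto_sum_jacobiTheta₂_term_mul_qpochN_ratio hp hτ z

end JacobiTripleProduct

section AdditionFormula

/-- Pairs of integers, sorted by the parity of their sum: `(i, j)` goes to `(i + j, i - j)` on the
even component and to `(i + j + 1, i - j)` on the odd one. -/
def intProdParityEquiv : (ℤ × ℤ) ⊕ (ℤ × ℤ) ≃ ℤ × ℤ where
  toFun := Sum.elim (fun x => (x.1 + x.2, x.1 - x.2)) fun x => (x.1 + x.2 + 1, x.1 - x.2)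
  invFun x := if Even (x.1 + x.2) then .inl ((x.1 + x.2) / 2, (x.1 - x.2) / 2)
    else .inr ((x.1 + x.2) / 2, (x.1 - x.2) / 2)
  left_inv := by
    rintro (⟨i, j⟩ | ⟨i, j⟩)
    · have : Even (i + j + (i - j)) := ⟨i, by ring⟩
      simp only [Sum.elim_inl, this, if_true]
      congr 2 <;> omega
    · have : ¬Even (i + j + 1 + (i - j)) := Int.not_even_iff_odd.mpr ⟨i, by ring⟩
      simp only [Sum.elim_inr, this, if_false]
      congr 2 <;> omega
  right_inv := by
    rintro ⟨m, n⟩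
    by_cases h : Even (m + n)
    · simp only [h, if_true, Sum.elim_inl, Prod.mk.injEq]
      grind
    · simp only [h, if_false, Sum.elim_inr, Prod.mk.injEq]
      grind

theorem jacobiTheta₂_add_mul_jacobiTheta₂_sub {τ : ℂ} (hτ : 0 < τ.im) (u v : ℂ) :
    jacobiTheta₂ (u + v) τ * jacobiTheta₂ (u - v) τ =
      jacobiTheta₂ (2 * u) (2 * τ) * jacobiTheta₂ (2 * v) (2 * τ) +
        cexp (2 * π * I * (u + v) + π * I * τ) *
          (jacobiTheta₂ (2 * u + τ) (2 * τ) * jacobiTheta₂ (2 * v + τ) (2 * τ)) := by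
  have hτ₂ : 0 < (2 * τ).im := by simpa using hτ
  have h_summable {σ : ℂ} (hσ : 0 < σ.im) (z : ℂ) :=
    ((summable_jacobiTheta₂_term_iff z σ).mpr hσ).norm
  have h_even (x : ℤ × ℤ) : jacobiTheta₂_term (x.1 + x.2) (u + v) τ *
      jacobiTheta₂_term (x.1 - x.2) (u - v) τ =
        jacobiTheta₂_term x.1 (2 * u) (2 * τ) * jacobiTheta₂_term x.2 (2 * v) (2 * τ) := by
    simp only [jacobiTheta₂_term, ← Complex.exp_add]
    congr 1
    push_cast
    ring
  have h_odd (x : ℤ × ℤ) : jacobiTheta₂_term (x.1 + x.2 + 1) (u + v) τ *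
      jacobiTheta₂_term (x.1 - x.2) (u - v) τ = cexp (2 * π * I * (u + v) + π * I * τ) *
        (jacobiTheta₂_term x.1 (2 * u + τ) (2 * τ) *
          jacobiTheta₂_term x.2 (2 * v + τ) (2 * τ)) := by
    simp only [jacobiTheta₂_term, ← Complex.exp_add]
    congr 1
    push_cast
    ring
  have h_even_summable := summable_mul_of_summable_norm
    (h_summable hτ₂ (2 * u)) (h_summable hτ₂ (2 * v))
  have h_odd_summable := (summable_mul_of_summable_norm
    (h_summable hτ₂ (2 * u + τ)) (h_summable hτ₂ (2 * v + τ))).mul_left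
      (cexp (2 * π * I * (u + v) + π * I * τ))
  simp only [jacobiTheta₂]
  rw [tsum_mul_tsum_of_summable_norm (h_summable hτ _) (h_summable hτ _),
    tsum_mul_tsum_of_summable_norm (h_summable hτ₂ _) (h_summable hτ₂ _),
    tsum_mul_tsum_of_summable_norm (h_summable hτ₂ _) (h_summable hτ₂ _),
    ← tsum_mul_left, ← intProdParityEquiv.tsum_eq, Summable.tsum_sum]
  · exact congrArg₂ _ (tsum_congr h_even) (tsum_congr h_odd)
  · exact h_even_summable.congr fun x => (h_even x).symm
  · exact h_odd_summable.congr fun x => (h_odd x).symm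

lemma theta_cexp_two_pi_I_mul {τ : ℂ} (hτ : 0 < τ.im) (u : ℂ) :
    theta (cexp (π * I * τ) ^ 2) (cexp (2 * π * I * u)) =
      jacobiTheta₂ (u + 1 / 2 - τ / 2) τ *
        (qpoch (cexp (π * I * τ) ^ 2) (cexp (π * I * τ) ^ 2))⁻¹ := by
  have h_exp : π * I * τ + 2 * π * I * (u + 1 / 2 - τ / 2) = 2 * π * I * u + π * I := by ring
  rw [← theta_neg_cexp_mul_cexp hτ, ← Complex.exp_add, h_exp, exp_add_pi_mul_I, neg_neg]

lemma jacobiTheta₂_add_mul_jacobiTheta₂_sub_half_period {τ : ℂ} (hτ : 0 < τ.im) (u v : ℂ) :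
    jacobiTheta₂ (u + v + 1 / 2 - τ / 2) τ * jacobiTheta₂ (u - v + 1 / 2 - τ / 2) τ =
      cexp (2 * π * I * u) ^ 2 *
          (jacobiTheta₂ (2 * u + τ) (2 * τ) * jacobiTheta₂ (2 * v) (2 * τ)) -
        cexp (2 * π * I * u) * cexp (2 * π * I * v) *
          (jacobiTheta₂ (2 * u) (2 * τ) * jacobiTheta₂ (2 * v + τ) (2 * τ)) := by
  have h_factor : cexp (2 * π * I * (u + 1 / 2 - τ / 2 + v) + π * I * τ) =
      -(cexp (2 * π * I * u) * cexp (2 * π * I * v)) := by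
    rw [← mul_neg_one, ← Complex.exp_pi_mul_I, ← Complex.exp_add, ← Complex.exp_add]
    ring_nf
  have h_shift : jacobiTheta₂ (2 * u - τ) (2 * τ) =
      cexp (2 * π * I * u) ^ 2 * jacobiTheta₂ (2 * u + τ) (2 * τ) := by
    have h := jacobiTheta₂_add_left' (2 * u - τ) (2 * τ)
    rw [show 2 * u - τ + 2 * τ = 2 * u + τ by ring] at h
    have h_exp : (2 : ℕ) * (2 * π * I * u) + -π * I * (2 * τ + 2 * (2 * u - τ)) = 0 := by
      push_cast
      ring
    rw [h, ← mul_assoc, ← Complex.exp_nat_mul, ← Complex.exp_add, h_exp, Complex.exp_zero, one_mul]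
  have h := jacobiTheta₂_add_mul_jacobiTheta₂_sub hτ (u + 1 / 2 - τ / 2) v
  rw [h_factor, show 2 * (u + 1 / 2 - τ / 2) = 2 * u - τ + 1 by ring, jacobiTheta₂_add_left,
    h_shift, show 2 * u - τ + 1 + τ = 2 * u + 1 by ring, jacobiTheta₂_add_left] at h
  rw [show u + v + 1 / 2 - τ / 2 = u + 1 / 2 - τ / 2 + v by ring,
    show u - v + 1 / 2 - τ / 2 = u + 1 / 2 - τ / 2 - v by ring, h]
  ring

lemma qpoch_eq_mul {p : ℂ} (hp : ‖p‖ < 1) (z : ℂ) : qpoch z p = (1 - z) * qpoch (z * p) p :=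
  tendsto_nhds_unique ((tendsto_qpochN hp z).comp (tendsto_add_atTop_nat 1)) <| by
    simpa only [Function.comp_def, qpochN_succ'] using (tendsto_qpochN hp (z * p)).const_mul (1 - z)

lemma theta_inv {p : ℂ} (hp : ‖p‖ < 1) {z : ℂ} (hz : z ≠ 0) : theta p z⁻¹ = -z⁻¹ * theta p z := by
  rw [theta, theta, qpoch_eq_mul hp z, qpoch_eq_mul hp z⁻¹, inv_inv, mul_comm p z, mul_comm p z⁻¹]
  field_simp
  ring

lemma theta_one {p : ℂ} (hp : ‖p‖ < 1) : theta p 1 = 0 := by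
  rw [theta, qpoch_eq_mul hp 1, sub_self, zero_mul, zero_mul]

lemma theta_zero_left (z : ℂ) : theta 0 z = 1 - z := by
  have h_one : qpoch 0 0 = 1 := by simp [qpoch]
  rw [theta, qpoch_eq_mul (by simp) z, mul_zero, zero_mul, h_one, mul_one, mul_one]

lemma exists_cexp_pi_I_mul_sq_eq {p : ℂ} (hp0 : p ≠ 0) (hp : ‖p‖ < 1) :
    ∃ τ : ℂ, 0 < τ.im ∧ cexp (π * I * τ) ^ 2 = p := by
  refine ⟨Function.Periodic.invQParam 1 p, ?_, ?_⟩
  · rw [Function.Periodic.im_invQParam]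
    exact mul_pos_of_neg_of_neg (div_neg_of_neg_of_pos (by simp) (by positivity))
      (Real.log_neg (norm_pos_iff.mpr hp0) hp)
  · rw [← Complex.exp_nat_mul]
    refine Eq.trans ?_ (Function.Periodic.qParam_right_inv one_ne_zero hp0)
    rw [Function.Periodic.qParam]
    congr 1
    push_cast
    ring

theorem exists_theta_mul_theta_div_eq {p : ℂ} (hp : ‖p‖ < 1) : ∃ F G : ℂ → ℂ, ∀ x y : ℂ,
    x ≠ 0 → y ≠ 0 → theta p (x * y) * theta p (x / y) = x * (F x * G y - G x * F y) := by
  rcases eq_or_ne p 0 with rfl | hp0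
  · refine ⟨fun x => x + x⁻¹, fun _ => 1, fun x y hx hy => ?_⟩
    simp only [theta_zero_left]
    field_simp
    ring
  obtain ⟨τ, hτ, rfl⟩ := exists_cexp_pi_I_mul_sq_eq hp0 hp
  set p := cexp (π * I * τ) ^ 2
  let L (x : ℂ) : ℂ := Complex.log x / (2 * π * I)
  have h_exp {x : ℂ} (hx : x ≠ 0) : cexp (2 * π * I * L x) = x := by
    rw [mul_div_cancel₀ _ two_pi_I_ne_zero, Complex.exp_log hx]
  refine ⟨fun x => (qpoch p p)⁻¹ * (x * jacobiTheta₂ (2 * L x + τ) (2 * τ)),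
    fun x => (qpoch p p)⁻¹ * jacobiTheta₂ (2 * L x) (2 * τ), fun x y hx hy => ?_⟩
  have h_mul : x * y = cexp (2 * π * I * (L x + L y)) := by
    rw [mul_add, Complex.exp_add, h_exp hx, h_exp hy]
  have h_div : x / y = cexp (2 * π * I * (L x - L y)) := by
    rw [mul_sub, Complex.exp_sub, h_exp hx, h_exp hy]
  have h := jacobiTheta₂_add_mul_jacobiTheta₂_sub_half_period hτ (L x) (L y)
  rw [h_exp hx, h_exp hy] at h
  rw [h_mul, h_div, theta_cexp_two_pi_I_mul hτ, theta_cexp_two_pi_I_mul hτ]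
  linear_combination (qpoch p p)⁻¹ ^ 2 * h

theorem theta_three_term {p : ℂ} (hp : ‖p‖ < 1) {x y u v : ℂ} (hx : x ≠ 0) (hy : y ≠ 0)
    (hu : u ≠ 0) (hv : v ≠ 0) :
    theta p (x * y) * theta p (x / y) * (theta p (u * v) * theta p (u / v)) =
      theta p (x * v) * theta p (x / v) * (theta p (u * y) * theta p (u / y)) -
        u / v * (theta p (x * u) * theta p (x / u) * (theta p (v * y) * theta p (v / y))) := by
  obtain ⟨F, G, h⟩ := exists_theta_mul_theta_div_eq hp
  rw [h x y hx hy, h u v hu hv, h x v hx hv, h u y hu hy, h x u hx hu, h v y hv hy]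
  field_simp
  ring

theorem theta_three_term_symm {p : ℂ} (hp : ‖p‖ < 1) {t b c d : ℂ} (ht : t ≠ 0) (hb : b ≠ 0)
    (hc : c ≠ 0) (hd : d ≠ 0) :
    theta p (t / b) * theta p (t / c) * theta p (t / d) * theta p (t / (b * c * d)) =
      theta p t * theta p (t / (b * c)) * theta p (t / (b * d)) * theta p (t / (c * d)) -
        t / (b * c * d) *
          (theta p b * theta p c * theta p d * theta p (t ^ 2 / (b * c * d))) := by
  obtain ⟨x, hx⟩ := IsAlgClosed.exists_pow_nat_eq (t ^ 2 / (b * c)) two_pos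
  have hx0 : x ≠ 0 := (pow_ne_zero_iff two_ne_zero).mp (by rw [hx]; simp [ht, hb, hc])
  obtain rfl : b = t ^ 2 / (x ^ 2 * c) := by rw [hx]; field_simp
  have h := theta_three_term hp (x := x) (y := x * c / t) (u := x / d) (v := t / x) hx0
    (by simp [hx0, hc, ht]) (by simp [hx0, hd]) (by simp [ht, hx0])
  field_simp at h ⊢
  exact h

end AdditionFormula

section ThetaPochhammer

variable {p q z : ℂ}

lemma thetaPochN_zero (p q z : ℂ) : thetaPochN p q z 0 = 1 := Finset.prod_range_zero _

lemma thetaPochN_succ (p q z : ℂ) (n : ℕ) :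
    thetaPochN p q z (n + 1) = thetaPochN p q z n * theta p (z * q ^ n) :=
  Finset.prod_range_succ _ n

lemma thetaPochN_succ' (p q z : ℂ) (n : ℕ) :
    thetaPochN p q z (n + 1) = theta p z * thetaPochN p q (z * q) n := by
  simp only [thetaPochN, Finset.prod_range_succ', pow_zero, mul_one, mul_assoc, ← pow_succ']
  rw [mul_comm]

lemma thetaPochN_one (p q z : ℂ) : thetaPochN p q z 1 = theta p z := by
  rw [thetaPochN_succ', thetaPochN_zero, mul_one]

lemma thetaPochN_zpow_neg_eq_zero (hp : ‖p‖ < 1) (hq : q ≠ 0) (n : ℕ) :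
    thetaPochN p q (q ^ (-n : ℤ)) (n + 1) = 0 := by
  rw [thetaPochN_succ, ← zpow_natCast q n, ← zpow_add₀ hq, neg_add_cancel, zpow_zero, theta_one hp,
    mul_zero]

/-- Genericity of a parameter `x` of a denominator: `θ(x;p)_n ≠ 0` for all `n`, stated factor by
factor. -/
def ThetaGeneric (p q x : ℂ) : Prop := ∀ j : ℕ, theta p (x * q ^ j) ≠ 0

lemma ThetaGeneric.theta_ne_zero (h : ThetaGeneric p q z) : theta p z ≠ 0 := by
  simpa using h 0

lemma ThetaGeneric.mul_pow (h : ThetaGeneric p q z) (k : ℕ) : ThetaGeneric p q (z * q ^ k) :=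
  fun j => by rw [mul_assoc, ← pow_add]; exact h (k + j)

lemma ThetaGeneric.theta_mul_pow_succ_div_ne_zero {a : ℂ} (h : ThetaGeneric p q (a * q / z))
    (n : ℕ) : theta p (a * q ^ (n + 1) / z) ≠ 0 := by
  rw [pow_succ', ← mul_assoc, ← div_mul_eq_mul_div]
  exact h n

end ThetaPochhammer

section VeryWellPoised

variable {p q a b c d e f : ℂ}

/-- The `n`-th term of the very-well-poised elliptic hypergeometric series in base `q` and nome `p`,
with well-poised numerator parameters `a, b, c, d, e, f`. -/
noncomputable def veryWellPoisedTerm (p q a b c d e f : ℂ) (n : ℕ) : ℂ :=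
  theta p (a * q ^ (2 * n)) / theta p a *
    (thetaPochN p q a n * thetaPochN p q b n * thetaPochN p q c n * thetaPochN p q d n *
      thetaPochN p q e n * thetaPochN p q f n) /
    (thetaPochN p q q n * thetaPochN p q (a * q / b) n * thetaPochN p q (a * q / c) n *
      thetaPochN p q (a * q / d) n * thetaPochN p q (a * q / e) n *
      thetaPochN p q (a * q / f) n) * q ^ n

/-- The closed form of the Frenkel–Turaev sum. The parameter `e` is eliminated by the balancing
condition. -/
noncomputable def frenkelTuraevProduct (p q a b c d : ℂ) (N : ℕ) : ℂ :=
  thetaPochN p q (a * q) N * thetaPochN p q (a * q / (b * c)) N *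
    thetaPochN p q (a * q / (b * d)) N * thetaPochN p q (a * q / (c * d)) N /
    (thetaPochN p q (a * q / b) N * thetaPochN p q (a * q / c) N *
      thetaPochN p q (a * q / d) N * thetaPochN p q (a * q / (b * c * d)) N)

lemma frenkelTuraevProduct_succ (p q a b c d : ℂ) (N : ℕ) :
    frenkelTuraevProduct p q a b c d (N + 1) =
      frenkelTuraevProduct p q a b c d 1 * frenkelTuraevProduct p q (a * q) b c d N := by
  simp only [frenkelTuraevProduct, thetaPochN_succ' _ _ _ N, thetaPochN_one, div_mul_eq_mul_div]
  ring

lemma theta_contiguity_left {y : ℂ} (hp : ‖p‖ < 1) (hq : q ≠ 0) (ha : a ≠ 0) (hb : b ≠ 0)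
    (hc : c ≠ 0) (hd : d ≠ 0) (hy : y ≠ 0) :
    theta p (a * q * y ^ 2) *
        (theta p (a * q / (b * c)) * theta p (a * q / (b * d)) * theta p (a * q / (c * d))) =
      theta p (a * (q * y) / b) * theta p (a * (q * y) / c) * theta p (a * (q * y) / d) *
          theta p (a * q / (b * c * d * y)) +
        a * q / (b * c * d * y) * (theta p (b * y) * theta p (c * y) * theta p (d * y) *
          theta p (a ^ 2 * q * (q * y) / (b * c * d))) := by
  have h := theta_three_term_symm hp (t := a * q * y ^ 2) (b := b * y) (c := c * y) (d := d * y)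
    (by simp [*]) (by simp [*]) (by simp [*]) (by simp [*])
  field_simp at h ⊢
  linear_combination -h

lemma theta_contiguity {x : ℂ} (hp : ‖p‖ < 1) (ha : a ≠ 0) (he : e ≠ 0) (hf : f ≠ 0) (hx : x ≠ 0) :
    theta p (a * x ^ 2) * theta p e * theta p f * theta p (e * f / a) =
      theta p (a * x) * theta p (e * x) * theta p (f * x) * theta p (e * f / (a * x)) +
        e * f / (a * x) *
          (theta p x * theta p (a * x / e) * theta p (a * x / f) * theta p (e * f * x)) := by
  have h := theta_three_term_symm hp (t := e * f * x) (b := e) (c := f) (d := a * x ^ 2)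
    (by simp [*]) he hf (by simp [*])
  have h_a := theta_inv hp (z := a * x) (by simp [*])
  have h_e := theta_inv hp (z := a * x / e) (by simp [*])
  have h_f := theta_inv hp (z := a * x / f) (by simp [*])
  field_simp at h h_a h_e h_f ⊢
  linear_combination (x * a) * h -
    x * a * theta p (e * x) * theta p (f * x) * theta p (e * f / (x * a)) * h_a +
    theta p x * theta p (e * f * x) * x * a * theta p (e / (x * a)) * h_f -
    theta p x * theta p (e * f * x) * f * theta p (x * a / f) * h_e

lemma theta_contiguity_of_balanced {x : ℂ} (hp : ‖p‖ < 1) (ha : a ≠ 0) (hb : b ≠ 0) (hc : c ≠ 0)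
    (hd : d ≠ 0) (he : e ≠ 0) (hf : f ≠ 0) (hx : x ≠ 0) (hbal : b * c * d * e * f = a ^ 2 * q) :
    theta p (a * x ^ 2) * theta p e * theta p f * theta p (a * q / (b * c * d)) =
      theta p (a * x) * theta p (e * x) * theta p (f * x) * theta p (a * q / (b * c * d * x)) +
        a * q / (b * c * d * x) *
          (theta p x * theta p (a * x / e) * theta p (a * x / f) *
            theta p (a ^ 2 * q * x / (b * c * d))) := by
  have h_ef : e * f / a = a * q / (b * c * d) := by
    field_simp
    linear_combination hbal
  have h_efx : a ^ 2 * q * x / (b * c * d) = e * f * x := by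
    rw [← hbal]
    field_simp
  rw [h_efx, ← div_div (a * q) (b * c * d) x, ← h_ef, div_div]
  exact theta_contiguity hp ha he hf hx

/-- The common factor of the term of index `n + 1` with parameters `a, b, c, d, e, f` and the term
of index `n` with parameters `aq, b, c, d, eq, fq`. -/
noncomputable def contiguityWeight (p q a b c d e f : ℂ) (n : ℕ) : ℂ :=
  thetaPochN p q (a * q) n * thetaPochN p q b n * thetaPochN p q c n * thetaPochN p q d n *
      thetaPochN p q (e * q) n * thetaPochN p q (f * q) n /
    (thetaPochN p q q n * thetaPochN p q (a * q / b) n * thetaPochN p q (a * q / c) n *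
      thetaPochN p q (a * q / d) n * thetaPochN p q (a * q / e) n *
      thetaPochN p q (a * q / f) n) * q ^ n

/-- The telescoping certificate: its increment from `n` to `n + 1` is the difference between the
term of index `n + 1` with parameters `a, b, c, d, e, f` and a constant multiple of the term of
index `n` with parameters `aq, b, c, d, eq, fq`. -/
noncomputable def contiguityRemainder (p q a b c d e f : ℂ) (n : ℕ) : ℂ :=
  theta p (a * q / (b * c * d * q ^ n)) / theta p (a * q / (b * c * d)) *
    contiguityWeight p q a b c d e f n

lemma contiguityWeight_succ (p q a b c d e f : ℂ) (n : ℕ) :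
    contiguityWeight p q a b c d e f (n + 1) =
      q * (theta p (b * q ^ n) * theta p (c * q ^ n) * theta p (d * q ^ n) *
          (theta p (a * q ^ (n + 1)) * theta p (e * q ^ (n + 1)) * theta p (f * q ^ (n + 1)))) /
        (theta p (a * q ^ (n + 1) / b) * theta p (a * q ^ (n + 1) / c) *
            theta p (a * q ^ (n + 1) / d) *
          (theta p (q ^ (n + 1)) * theta p (a * q ^ (n + 1) / e) *
            theta p (a * q ^ (n + 1) / f))) *
        contiguityWeight p q a b c d e f n := by
  simp only [contiguityWeight, thetaPochN_succ, pow_succ', div_mul_eq_mul_div, mul_assoc]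
  ring

lemma veryWellPoisedTerm_succ (ha : theta p a ≠ 0) (n : ℕ) :
    veryWellPoisedTerm p q a b c d e f (n + 1) =
      q * (theta p (b * q ^ n) * theta p (c * q ^ n) * theta p (d * q ^ n) *
          (theta p (a * (q ^ (n + 1)) ^ 2) * theta p e * theta p f)) /
        (theta p (a * q ^ (n + 1) / b) * theta p (a * q ^ (n + 1) / c) *
            theta p (a * q ^ (n + 1) / d) *
          (theta p (q ^ (n + 1)) * theta p (a * q ^ (n + 1) / e) *
            theta p (a * q ^ (n + 1) / f))) *
        contiguityWeight p q a b c d e f n := by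
  have h_poch : thetaPochN p q (a * q) n = thetaPochN p q a (n + 1) / theta p a := by
    rw [thetaPochN_succ', mul_div_cancel_left₀ _ ha]
  rw [veryWellPoisedTerm, contiguityWeight, h_poch, thetaPochN_succ' p q e, thetaPochN_succ' p q f,
    ← pow_mul, mul_comm (n + 1) 2]
  simp only [thetaPochN_succ _ _ b, thetaPochN_succ _ _ c, thetaPochN_succ _ _ d,
    thetaPochN_succ _ _ q, thetaPochN_succ _ _ (_ / _), div_mul_eq_mul_div, mul_assoc a q (q ^ n),
    ← pow_succ']
  ring

lemma frenkelTuraevProduct_one_mul_veryWellPoisedTerm (hq : q ≠ 0) (haq : theta p (a * q) ≠ 0)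
    (n : ℕ) :
    frenkelTuraevProduct p q a b c d 1 *
        veryWellPoisedTerm p q (a * q) b c d (e * q) (f * q) n =
      theta p (a * q * (q ^ n) ^ 2) * (theta p (a * q / (b * c)) * theta p (a * q / (b * d)) *
          theta p (a * q / (c * d))) /
        (theta p (a * q ^ (n + 1) / b) * theta p (a * q ^ (n + 1) / c) *
            theta p (a * q ^ (n + 1) / d) *
          theta p (a * q / (b * c * d))) *
        contiguityWeight p q a b c d e f n := by
  have h_poch (z : ℂ) : theta p (a * q / z) * thetaPochN p q (a * q * q / z) n =
      theta p (a * q ^ (n + 1) / z) * thetaPochN p q (a * q / z) n := by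
    rw [← div_mul_eq_mul_div (a * q) z q, ← thetaPochN_succ', thetaPochN_succ, div_mul_eq_mul_div,
      mul_assoc, ← pow_succ', mul_comm]
  rw [frenkelTuraevProduct, veryWellPoisedTerm, contiguityWeight]
  simp only [thetaPochN_one, mul_div_mul_right _ _ hq]
  calc
    _ = theta p (a * q) * (theta p (a * q * q ^ (2 * n)) / theta p (a * q)) *
          (theta p (a * q / (b * c)) * theta p (a * q / (b * d)) * theta p (a * q / (c * d)) *
            (thetaPochN p q (a * q) n * thetaPochN p q b n * thetaPochN p q c n *
              thetaPochN p q d n * thetaPochN p q (e * q) n * thetaPochN p q (f * q) n)) /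
        (theta p (a * q / b) * thetaPochN p q (a * q * q / b) n *
          (theta p (a * q / c) * thetaPochN p q (a * q * q / c) n) *
          (theta p (a * q / d) * thetaPochN p q (a * q * q / d) n) * theta p (a * q / (b * c * d)) *
          (thetaPochN p q q n * thetaPochN p q (a * q / e) n * thetaPochN p q (a * q / f) n)) *
        q ^ n := by ring
    _ = _ := by
      rw [mul_div_cancel₀ _ haq, h_poch, h_poch, h_poch, mul_comm 2 n, pow_mul]
      ring

lemma veryWellPoisedTerm_succ_add (hp : ‖p‖ < 1) (hq : q ≠ 0) (ha : a ≠ 0)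
    (hbal : b * c * d * e * f = a ^ 2 * q)
    (hgen : ∀ x ∈ ({q, a, a * q / b, a * q / c, a * q / d, a * q / e, a * q / f,
      a * q / (b * c * d)} : Set ℂ), ThetaGeneric p q x) (n : ℕ) :
    veryWellPoisedTerm p q a b c d e f (n + 1) + contiguityRemainder p q a b c d e f n =
      frenkelTuraevProduct p q a b c d 1 *
          veryWellPoisedTerm p q (a * q) b c d (e * q) (f * q) n +
        contiguityRemainder p q a b c d e f (n + 1) := by
  obtain ⟨⟨⟨⟨hb, hc⟩, hd⟩, he⟩, hf⟩ :
      (((b ≠ 0 ∧ c ≠ 0) ∧ d ≠ 0) ∧ e ≠ 0) ∧ f ≠ 0 := by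
    simpa only [← mul_ne_zero_iff, hbal] using mul_ne_zero (pow_ne_zero 2 ha) hq
  simp only [Set.forall_mem_insert, Set.mem_singleton_iff, forall_eq] at hgen
  obtain ⟨hq_gen, ha_gen, hb_gen, hc_gen, hd_gen, he_gen, hf_gen, hbcd_gen⟩ := hgen
  have hbcd := hbcd_gen.theta_ne_zero
  have h_bcd := mul_ne_zero (mul_ne_zero (hb_gen.theta_mul_pow_succ_div_ne_zero n)
    (hc_gen.theta_mul_pow_succ_div_ne_zero n)) (hd_gen.theta_mul_pow_succ_div_ne_zero n)
  have h_ef := mul_ne_zero (mul_ne_zero (hq_gen n) (he_gen.theta_mul_pow_succ_div_ne_zero n))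
    (hf_gen.theta_mul_pow_succ_div_ne_zero n)
  rw [← pow_succ'] at h_ef
  have h_split := theta_contiguity_of_balanced hp ha hb hc hd he hf (pow_ne_zero (n + 1) hq) hbal
  have h_merge := theta_contiguity_left hp hq ha hb hc hd (pow_ne_zero n hq)
  have h_coeff : a * q / (b * c * d * q ^ n) = q * (a * q / (b * c * d * q ^ (n + 1))) := by
    rw [pow_succ]
    field_simp
  rw [← pow_succ'] at h_merge
  rw [veryWellPoisedTerm_succ ha_gen.theta_ne_zero,
    frenkelTuraevProduct_one_mul_veryWellPoisedTerm hq (by simpa using ha_gen 1), h_merge,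
    contiguityRemainder, contiguityRemainder, contiguityWeight_succ, h_coeff]
  -- In these grouped theta factors the claim is a rational identity equivalent to `h_split`.
  generalize theta p (a * q ^ (n + 1) / b) * theta p (a * q ^ (n + 1) / c) *
      theta p (a * q ^ (n + 1) / d) = X,
    theta p (q ^ (n + 1)) * theta p (a * q ^ (n + 1) / e) * theta p (a * q ^ (n + 1) / f) = W,
    theta p (b * q ^ n) * theta p (c * q ^ n) * theta p (d * q ^ n) = Y,
    theta p (a * q ^ (n + 1)) * theta p (e * q ^ (n + 1)) * theta p (f * q ^ (n + 1)) = Z,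
    theta p (a ^ 2 * q * q ^ (n + 1) / (b * c * d)) = C, theta p (a * q / (b * c * d)) = T,
    a * q / (b * c * d * q ^ (n + 1)) = g at *
  field_simp
  linear_combination contiguityWeight p q a b c d e f n * q * Y * h_split

lemma sum_range_succ_veryWellPoisedTerm (hp : ‖p‖ < 1) (hq : q ≠ 0) (ha : a ≠ 0)
    (hbal : b * c * d * e * f = a ^ 2 * q)
    (hgen : ∀ x ∈ ({q, a, a * q / b, a * q / c, a * q / d, a * q / e, a * q / f,
      a * q / (b * c * d)} : Set ℂ), ThetaGeneric p q x) (M : ℕ) :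
    ∑ n ∈ Finset.range (M + 1), veryWellPoisedTerm p q a b c d e f n =
      frenkelTuraevProduct p q a b c d 1 * ∑ n ∈ Finset.range M,
          veryWellPoisedTerm p q (a * q) b c d (e * q) (f * q) n +
        contiguityRemainder p q a b c d e f M := by
  induction M with
  | zero =>
    have ha_ne := (hgen a (by simp)).theta_ne_zero
    have hbcd_ne := (hgen (a * q / (b * c * d)) (by simp)).theta_ne_zero
    simp [veryWellPoisedTerm, contiguityRemainder, contiguityWeight, thetaPochN_zero, ha_ne,
      hbcd_ne]
  | succ M ih =>
    rw [Finset.sum_range_succ, ih, Finset.sum_range_succ]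
    linear_combination veryWellPoisedTerm_succ_add hp hq ha hbal hgen M

lemma zpow_neg_natCast_succ_mul (hq : q ≠ 0) (n : ℕ) :
    q ^ (-((n + 1 : ℕ) : ℤ)) * q = q ^ (-(n : ℤ)) := by
  rw [← zpow_add_one₀ hq, Nat.cast_add_one, neg_add, neg_add_cancel_right]

lemma mul_div_zpow_neg_natCast (a q : ℂ) (n : ℕ) :
    a * q / q ^ (-(n : ℤ)) = a * q ^ (n + 1) := by
  rw [zpow_neg, div_inv_eq_mul, zpow_natCast, mul_assoc, ← pow_succ']

lemma contiguityRemainder_zpow_neg_eq_zero (hp : ‖p‖ < 1) (hq : q ≠ 0) (n : ℕ) :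
    contiguityRemainder p q a b c d e (q ^ (-((n + 1 : ℕ) : ℤ))) (n + 1) = 0 := by
  rw [contiguityRemainder, contiguityWeight, zpow_neg_natCast_succ_mul hq,
    thetaPochN_zpow_neg_eq_zero hp hq, mul_zero, zero_div, zero_mul, mul_zero]

theorem frenkel_turaev_summation_general (hp : ‖p‖ < 1) (hq : q ≠ 0) (ha : a ≠ 0) (N : ℕ)
    (hbal : b * c * d * e = a ^ 2 * q ^ (N + 1))
    (hgen : ∀ x ∈ ({q, a, a * q / b, a * q / c, a * q / d, a * q / e,
      a * q / (b * c * d)} : Set ℂ), ThetaGeneric p q x) :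
    ∑ n ∈ Finset.range (N + 1), veryWellPoisedTerm p q a b c d e (q ^ (-(N : ℤ))) n =
      frenkelTuraevProduct p q a b c d N := by
  simp only [Set.forall_mem_insert, Set.mem_singleton_iff, forall_eq] at hgen
  obtain ⟨hq_gen, ha_gen, hb_gen, hc_gen, hd_gen, he_gen, hbcd_gen⟩ := hgen
  induction N generalizing a e with
  | zero =>
    simp [veryWellPoisedTerm, frenkelTuraevProduct, thetaPochN_zero, ha_gen.theta_ne_zero]
  | succ N ih =>
    have hf_gen : ThetaGeneric p q (a * q / q ^ (-((N + 1 : ℕ) : ℤ))) := by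
      rw [mul_div_zpow_neg_natCast]
      exact ha_gen.mul_pow _
    have h_shift {z : ℂ} (hz : ThetaGeneric p q (a * q / z)) :
        ThetaGeneric p q (a * q * q / z) := by
      rw [← div_mul_eq_mul_div]
      simpa only [pow_one] using hz.mul_pow 1
    have hbal' : b * c * d * e * q ^ (-((N + 1 : ℕ) : ℤ)) = a ^ 2 * q := by
      rw [hbal, zpow_neg, zpow_natCast, pow_succ' q (N + 1), ← mul_assoc,
        mul_inv_cancel_right₀ (pow_ne_zero _ hq)]
    rw [sum_range_succ_veryWellPoisedTerm hp hq ha hbal' (by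
        simp only [Set.forall_mem_insert, Set.mem_singleton_iff, forall_eq]
        exact ⟨hq_gen, ha_gen, hb_gen, hc_gen, hd_gen, he_gen, hf_gen, hbcd_gen⟩),
      contiguityRemainder_zpow_neg_eq_zero hp hq, add_zero, zpow_neg_natCast_succ_mul hq,
      frenkelTuraevProduct_succ p q a b c d N]
    congr 1
    exact ih (mul_ne_zero ha hq) (by linear_combination q * hbal) (by simpa using ha_gen.mul_pow 1)
      (h_shift hb_gen) (h_shift hc_gen) (h_shift hd_gen) (by rwa [mul_div_mul_right _ _ hq])
      (h_shift hbcd_gen)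

end VeryWellPoised

theorem frenkel_turaev_summation (p q a b c d e : ℂ) (hp : ‖p‖ < 1) (hq : ‖q‖ < 1)
    (hq0 : q ≠ 0) (ha : a ≠ 0) (hb : b ≠ 0) (hc : c ≠ 0) (hd : d ≠ 0) (he : e ≠ 0)
    (N : ℕ) (hbal : b * c * d * e = a ^ 2 * q ^ (N + 1))
    (hgen : ∀ x ∈ ({q, a, a * q / b, a * q / c, a * q / d, a * q / e, a * q ^ (N + 1),
        a * q / (b * c * d)} : Set ℂ), ∀ j : ℕ, theta p (x * q ^ j) ≠ 0) :
    ∑ n ∈ Finset.range (N + 1),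
        theta p (a * q ^ (2 * n)) / theta p a *
          (thetaPochN p q a n * thetaPochN p q b n * thetaPochN p q c n * thetaPochN p q d n *
            thetaPochN p q e n * thetaPochN p q (q ^ (-(N : ℤ))) n) /
          (thetaPochN p q q n * thetaPochN p q (a * q / b) n * thetaPochN p q (a * q / c) n *
            thetaPochN p q (a * q / d) n * thetaPochN p q (a * q / e) n *
            thetaPochN p q (a * q ^ (N + 1)) n) * q ^ n
      = thetaPochN p q (a * q) N * thetaPochN p q (a * q / (b * c)) N *
          thetaPochN p q (a * q / (b * d)) N * thetaPochN p q (a * q / (c * d)) N /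
          (thetaPochN p q (a * q / b) N * thetaPochN p q (a * q / c) N *
            thetaPochN p q (a * q / d) N * thetaPochN p q (a * q / (b * c * d)) N) := by
  have h := frenkel_turaev_summation_general hp hq0 ha N hbal fun x hx =>
    hgen x (by simp only [Set.mem_insert_iff] at hx ⊢; tauto)
  simpa only [veryWellPoisedTerm, frenkelTuraevProduct, mul_div_zpow_neg_natCast] using h
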